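/- Let 𝕄 = ⟨M, 𝒞⟩ be a countable transitive model of GB⁻. If ℙ is a pretame notion of class forcing for 𝕄, then no proper class X of 𝕄 is turned into a set by forcing with ℙ. -/

import Mathlib

noncomputable section

namespace CF

open scoped ZFSet

attribute [local instance] Classical.propDecidable

/-! ### First-order formulas of the language of set theory -/

/-- First-order `∈`-formulas with variables indexed by `ℕ`. -/
inductive EFormula : Type
  | mem : ℕ → ℕ → EFormula
  | eq : ℕ → ℕ → EFormula
  | not : EFormula → EFormula
  | or : EFormula → EFormula → EFormula
  | ex : ℕ → EFormula → EFormula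

/-- Satisfaction of an `∈`-formula in the structure `⟨D, ∈⟩` under assignment `v`. -/
def EFormula.Sat (D : Set ZFSet) (v : ℕ → ZFSet) : EFormula → Prop
  | .mem i j => v i ∈ v j
  | .eq i j => v i = v j
  | .not φ => ¬ EFormula.Sat D v φ
  | .or φ ψ => EFormula.Sat D v φ ∨ EFormula.Sat D v ψ
  | .ex i φ => ∃ x ∈ D, EFormula.Sat D (Function.update v i x) φ

/-- All variables occurring in the formula are `< m`. -/
def EFormula.VarsLt (m : ℕ) : EFormula → Prop
  | .mem i j => i < m ∧ j < m
  | .eq i j => i < m ∧ j < m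
  | .not φ => EFormula.VarsLt m φ
  | .or φ ψ => EFormula.VarsLt m φ ∧ EFormula.VarsLt m ψ
  | .ex i φ => i < m ∧ EFormula.VarsLt m φ

/-- First-order formulas of the two-sorted language of `GB⁻`: set variables indexed by `ℕ`,
class parameters indexed by `ℕ`, and only set quantifiers. -/
inductive GBFormula : Type
  | mem : ℕ → ℕ → GBFormula
  | eq : ℕ → ℕ → GBFormula
  | cls : ℕ → ℕ → GBFormula    -- `vᵢ ∈ C_j`
  | not : GBFormula → GBFormula
  | or : GBFormula → GBFormula → GBFormula
  | ex : ℕ → GBFormula → GBFormula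

/-- Satisfaction of a `GBFormula` with set quantifiers ranging over `Mset`,
class parameters `Cs` and set assignment `v`. -/
def GBFormula.Sat (Mset : Set ZFSet) (Cs : ℕ → Set ZFSet) (v : ℕ → ZFSet) : GBFormula → Prop
  | .mem i j => v i ∈ v j
  | .eq i j => v i = v j
  | .cls i j => v i ∈ Cs j
  | .not φ => ¬ GBFormula.Sat Mset Cs v φ
  | .or φ ψ => GBFormula.Sat Mset Cs v φ ∨ GBFormula.Sat Mset Cs v ψ
  | .ex i φ => ∃ x ∈ Mset, GBFormula.Sat Mset Cs (Function.update v i x) φ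

/-! ### Countable transitive models of GB⁻ -/

/-- A countable transitive second-order model `𝕄 = ⟨M, 𝒞⟩` of `GB⁻`:
`M` is transitive and countable, classes are subsets of `M`, sets are classes, and the axioms
of `GB⁻` hold (extensionality and foundation are automatic for `ZFSet`; the set axioms of `ZF⁻`
with separation and collection allowing class parameters, together with first-order class
comprehension, are listed). -/
structure GBModel.{u} where
  M : Set ZFSet.{u}
  Cls : Set (Set ZFSet)
  countable_M : M.Countable
  countable_Cls : Cls.Countable
  transitive : ∀ x ∈ M, ∀ y : ZFSet, y ∈ x → y ∈ M
  sets_are_classes : ∀ x ∈ M, x.toSet ∈ Cls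
  classes_sub : ∀ C ∈ Cls, C ⊆ M
  empty_mem : (∅ : ZFSet) ∈ M
  pair_mem : ∀ x ∈ M, ∀ y ∈ M, ({x, y} : ZFSet) ∈ M
  sUnion_mem : ∀ x ∈ M, (⋃₀ x : ZFSet) ∈ M
  omega_mem : ZFSet.omega ∈ M
  comprehension : ∀ (φ : GBFormula) (v : ℕ → ZFSet) (Cs : ℕ → Set ZFSet),
    (∀ n, v n ∈ M) → (∀ n, Cs n ∈ Cls) →
    {x : ZFSet | x ∈ M ∧ GBFormula.Sat M Cs (Function.update v 0 x) φ} ∈ Cls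
  separation : ∀ C ∈ Cls, ∀ a ∈ M, ∃ b ∈ M, ∀ x : ZFSet, x ∈ b ↔ x ∈ a ∧ x ∈ C
  collection : ∀ C ∈ Cls, ∀ a ∈ M,
    (∀ x : ZFSet, x ∈ a → ∃ y ∈ M, x.pair y ∈ C) →
    ∃ b ∈ M, ∀ x : ZFSet, x ∈ a → ∃ y : ZFSet, y ∈ b ∧ x.pair y ∈ C

/-- A notion of class forcing `ℙ = ⟨P, ≤_ℙ⟩` for `𝕄`: a partial order (with maximal element
`𝟙_ℙ`) whose domain and order relation are classes of `𝕄`. -/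
structure ClassForcing (𝕄 : GBModel) where
  P : Set ZFSet
  le : ZFSet → ZFSet → Prop
  one : ZFSet
  one_mem : one ∈ P
  le_one : ∀ p ∈ P, le p one
  le_refl : ∀ p ∈ P, le p p
  le_trans : ∀ p q r : ZFSet, le p q → le q r → le p r
  P_cls : P ∈ 𝕄.Cls
  le_cls : {x : ZFSet | ∃ p ∈ P, ∃ q ∈ P, le p q ∧ x = p.pair q} ∈ 𝕄.Cls

/-! ### Names and their evaluation -/

/-- Auxiliary rank-bounded version of `IsName`. -/
def IsNameAux (S : Set ZFSet) (o : Ordinal) (σ : ZFSet) : Prop :=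
  ∀ x ∈ σ.toSet, ∃ τ p : ZFSet, x = τ.pair p ∧ p ∈ S ∧
    ∃ _h : τ.rank < o, IsNameAux S τ.rank τ
termination_by o

/-- `σ` is a `ℙ`-name (for the forcing with conditions `S`): every element of `σ` is a pair
`⟨τ, p⟩` with `τ` a `ℙ`-name and `p ∈ S`. -/
def IsName (S : Set ZFSet) (σ : ZFSet) : Prop := IsNameAux S σ.rank σ

/-- Image of a ZFSet under an arbitrary function (using choice for definability). -/
def zimage (f : ZFSet → ZFSet) (x : ZFSet) : ZFSet :=
  @ZFSet.image f (Classical.allZFSetDefinable _) x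

/-- Auxiliary rank-bounded version of the evaluation `σ^G` of a name by a filter. -/
def nameEvalAux (G : Set ZFSet) (o : Ordinal) (σ : ZFSet) : ZFSet :=
  zimage (fun τ => if h : τ.rank < o then nameEvalAux G τ.rank τ else ∅)
    (ZFSet.sep (fun τ => ∃ p, p ∈ G ∧ τ.pair p ∈ σ) (⋃₀ ⋃₀ σ))
termination_by o
decreasing_by exact h

/-- The evaluation `σ^G = {τ^G | ∃ p ∈ G, ⟨τ, p⟩ ∈ σ}` of a name `σ` by a filter `G`. -/
def nameEval (G : Set ZFSet) (σ : ZFSet) : ZFSet := nameEvalAux G σ.rank σ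

/-- Auxiliary rank-bounded version of `nameTC`. -/
def nameTCAux (o : Ordinal) (σ : ZFSet) : Set ZFSet :=
  {x | ∃ τ p : ZFSet, τ.pair p ∈ σ ∧ (x = p ∨ ∃ _h : τ.rank < o, x ∈ nameTCAux τ.rank τ)}
termination_by o

/-- The set `tc(σ) = ⋃ {{p} ∪ tc(τ) | ⟨τ,p⟩ ∈ σ}` of conditions appearing in the transitive
closure of the name `σ`. -/
def nameTC (σ : ZFSet) : Set ZFSet := nameTCAux σ.rank σ

/-! ### Filters, genericity, generic extensions -/

/-- `G` is a filter on the partial order with domain `S` and ordering `le`. -/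
def IsFilterOn (S : Set ZFSet) (le : ZFSet → ZFSet → Prop) (G : Set ZFSet) : Prop :=
  G ⊆ S ∧ G.Nonempty ∧ (∀ p ∈ G, ∀ q ∈ S, le p q → q ∈ G) ∧
    ∀ p ∈ G, ∀ q ∈ G, ∃ r ∈ G, le r p ∧ le r q

/-- `D` is a dense subclass of the partial order `⟨S, le⟩`. -/
def DenseIn (S : Set ZFSet) (le : ZFSet → ZFSet → Prop) (D : Set ZFSet) : Prop :=
  D ⊆ S ∧ ∀ p ∈ S, ∃ q ∈ D, le q p

/-- `G` is a generic filter on `⟨S, le⟩` over `𝕄`: a filter meeting every dense subclass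
of `⟨S, le⟩` lying in `𝒞`. -/
def IsGeneric (𝕄 : GBModel) (S : Set ZFSet) (le : ZFSet → ZFSet → Prop) (G : Set ZFSet) : Prop :=
  IsFilterOn S le G ∧ ∀ D ∈ 𝕄.Cls, DenseIn S le D → (G ∩ D).Nonempty

/-- The generic extension `M[G] = {σ^G | σ ∈ M a name for the forcing with domain S}`. -/
def MGen (𝕄 : GBModel) (S : Set ZFSet) (G : Set ZFSet) : Set ZFSet :=
  {x | ∃ σ : ZFSet, σ ∈ 𝕄.M ∧ IsName S σ ∧ nameEval G σ = x}

/-! ### Compatibility, the set decision property -/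

/-- `p` and `q` are compatible in `⟨S, le⟩`. -/
def Compat (S : Set ZFSet) (le : ZFSet → ZFSet → Prop) (p q : ZFSet) : Prop :=
  ∃ r ∈ S, le r p ∧ le r q

/-- `p ≤* q` : every extension of `p` is compatible with `q`. -/
def leStar (S : Set ZFSet) (le : ZFSet → ZFSet → Prop) (p q : ZFSet) : Prop :=
  ∀ r ∈ S, le r p → Compat S le r q

/-- `p` decides the set of conditions `A`: for every `a ∈ A`, either `p ≤* a` or `p ⊥ a`. -/
def Decides (S : Set ZFSet) (le : ZFSet → ZFSet → Prop) (p A : ZFSet) : Prop :=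
  ∀ a : ZFSet, a ∈ A → leStar S le p a ∨ ¬ Compat S le p a

/-- The set decision property: every set of conditions in `M` is decided densely. -/
def SetDecisionProperty (𝕄 : GBModel) (F : ClassForcing 𝕄) : Prop :=
  ∀ p ∈ F.P, ∀ A : ZFSet, A ∈ 𝕄.M → (∀ a : ZFSet, a ∈ A → a ∈ F.P) →
    ∃ q ∈ F.P, F.le q p ∧ Decides F.P F.le q A

/-! ### The forcing theorem -/

/-- Encode a finite list of sets as a single set by iterated Kuratowski pairing. -/
def listEncode : List ZFSet → ZFSet
  | [] => ∅
  | a :: l => a.pair (listEncode l)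

/-- The assignment sending variable `n < m` to `σₙ^G` (and `∅` beyond `m`). -/
def namesAssign (G : Set ZFSet) (m : ℕ) (σs : Fin m → ZFSet) : ℕ → ZFSet :=
  fun n => if h : n < m then nameEval G (σs ⟨n, h⟩) else ∅

/-- `p ⊩_ℙ φ(σ₀, …, σ_{m-1})` : for every generic `G ∋ p`, `M[G] ⊨ φ(σ₀^G, …, σ_{m-1}^G)`. -/
def Forces (𝕄 : GBModel) (F : ClassForcing 𝕄) (φ : EFormula) (m : ℕ) (p : ZFSet)
    (σs : Fin m → ZFSet) : Prop :=
  ∀ G : Set ZFSet, IsGeneric 𝕄 F.P F.le G → p ∈ G →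
    EFormula.Sat (MGen 𝕄 F.P G) (namesAssign G m σs) φ

/-- `ℙ` satisfies the forcing theorem over `𝕄`: for every `∈`-formula `φ(v₀,…,v_{m-1})`,
the forcing relation is a class of `𝕄` (definability lemma) and everything true in a generic
extension is forced by a condition in the generic filter (truth lemma). -/
def SatisfiesForcingTheorem (𝕄 : GBModel) (F : ClassForcing 𝕄) : Prop :=
  ∀ (φ : EFormula) (m : ℕ), EFormula.VarsLt m φ →
    ({x : ZFSet | ∃ p ∈ F.P, ∃ σs : Fin m → ZFSet,
        (∀ i, σs i ∈ 𝕄.M ∧ IsName F.P (σs i)) ∧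
        Forces 𝕄 F φ m p σs ∧
        x = p.pair (listEncode (List.ofFn σs))} ∈ 𝕄.Cls) ∧
    ∀ σs : Fin m → ZFSet, (∀ i, σs i ∈ 𝕄.M ∧ IsName F.P (σs i)) →
      ∀ G : Set ZFSet, IsGeneric 𝕄 F.P F.le G →
        EFormula.Sat (MGen 𝕄 F.P G) (namesAssign G m σs) φ →
        ∃ p ∈ G, Forces 𝕄 F φ m p σs

/-! ### Complete subforcings, the set reduction property -/

/-- `A` is an antichain of the partial order `⟨S, le⟩`. -/
def IsAntichainIn (S : Set ZFSet) (le : ZFSet → ZFSet → Prop) (A : Set ZFSet) : Prop :=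
  A ⊆ S ∧ ∀ p ∈ A, ∀ q ∈ A, p ≠ q → ¬ Compat S le p q

/-- `A` is a maximal antichain of the partial order `⟨S, le⟩`. -/
def IsMaxAntichainIn (S : Set ZFSet) (le : ZFSet → ZFSet → Prop) (A : Set ZFSet) : Prop :=
  IsAntichainIn S le A ∧ ∀ p ∈ S, ∃ a ∈ A, Compat S le p a

/-- `ℚ ⊲∘ ℙ` : `Q` is a set-sized complete subforcing of `ℙ` (with the induced ordering):
`Q ∈ M`, `Q ⊆ P`, `𝟙 ∈ Q`, and every maximal antichain of `ℚ` in `M` is predense in `ℙ`. -/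
def IsCompleteSub (𝕄 : GBModel) (F : ClassForcing 𝕄) (Q : ZFSet) : Prop :=
  Q ∈ 𝕄.M ∧ Q.toSet ⊆ F.P ∧ F.one ∈ Q ∧
    ∀ A : ZFSet, A ∈ 𝕄.M → A.toSet ⊆ Q.toSet → IsMaxAntichainIn Q.toSet F.le A.toSet →
      ∀ p ∈ F.P, ∃ a : ZFSet, a ∈ A ∧ Compat F.P F.le p a

/-- `ℚ^{∥q}` : the conditions of `Q` compatible with `q` in `ℙ`. -/
def QPar (𝕄 : GBModel) (F : ClassForcing 𝕄) (Q : ZFSet) (q : ZFSet) : Set ZFSet :=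
  {r | r ∈ Q ∧ Compat F.P F.le r q}

/-- The property `(*)(A, q, ℚ)`: for every `a ∈ A`, the set of `r ∈ ℚ^{∥q}` such that either
all `s ≤ q, r` satisfy `s ≤* a`, or all `s ≤ q, r` satisfy `s ⊥ a`, is dense in `ℚ^{∥q}`. -/
def StarProp (𝕄 : GBModel) (F : ClassForcing 𝕄) (A q Q : ZFSet) : Prop :=
  ∀ a : ZFSet, a ∈ A → ∀ r₀ ∈ QPar 𝕄 F Q q, ∃ r₁ ∈ QPar 𝕄 F Q q, F.le r₁ r₀ ∧
    ((∀ s ∈ F.P, F.le s q → F.le s r₁ → leStar F.P F.le s a) ∨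
      (∀ s ∈ F.P, F.le s q → F.le s r₁ → ¬ Compat F.P F.le s a))

/-- The set reduction property. -/
def SetReductionProperty (𝕄 : GBModel) (F : ClassForcing 𝕄) : Prop :=
  ∀ A : ZFSet, A ∈ 𝕄.M → (∀ a : ZFSet, a ∈ A → a ∈ F.P) →
    ∀ p ∈ F.P, ∃ q ∈ F.P, F.le q p ∧ ∃ Q : ZFSet, IsCompleteSub 𝕄 F Q ∧ StarProp 𝕄 F A q Q

/-- Every new set added by `ℙ` is added by a set-sized complete subforcing of `ℙ`. -/
def EveryNewSetBySub (𝕄 : GBModel) (F : ClassForcing 𝕄) : Prop :=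
  ∀ G : Set ZFSet, IsGeneric 𝕄 F.P F.le G →
    ∀ x : ZFSet, x ∈ MGen 𝕄 F.P G → x ∉ 𝕄.M →
      ∃ Q : ZFSet, IsCompleteSub 𝕄 F Q ∧ x ∈ MGen 𝕄 Q.toSet (G ∩ Q.toSet)

/-! ### The q-reduction of a name -/

/-- First component of a Kuratowski pair (junk value `∅` otherwise). -/
def fstZ (x : ZFSet) : ZFSet :=
  if h : ∃ a b : ZFSet, x = a.pair b then h.choose else ∅

/-- Second component of a Kuratowski pair (junk value `∅` otherwise). -/
def sndZ (x : ZFSet) : ZFSet :=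
  if h : ∃ a b : ZFSet, x = a.pair b then h.choose_spec.choose else ∅

/-- Cartesian product of two `ZFSet`s. -/
def zprod (a b : ZFSet) : ZFSet :=
  ZFSet.sep (fun x => ∃ u v : ZFSet, u ∈ a ∧ v ∈ b ∧ x = u.pair v)
    (ZFSet.powerset (ZFSet.powerset (a ∪ b)))

/-- Auxiliary rank-bounded version of the `q`-reduction of a name to `Q`. -/
def reduceAux (S : Set ZFSet) (le : ZFSet → ZFSet → Prop) (Q q : ZFSet) (o : Ordinal)
    (σ : ZFSet) : ZFSet :=
  zimage
    (fun x =>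
      (if h : (fstZ x).rank < o then reduceAux S le Q q (fstZ x).rank (fstZ x) else ∅).pair
        (sndZ x))
    (ZFSet.sep
      (fun x => ∃ τ r : ZFSet, x = τ.pair r ∧ r ∈ Q ∧
        ∃ a : ZFSet, τ.pair a ∈ σ ∧ ∀ s ∈ S, le s q → le s r → leStar S le s a)
      (zprod (⋃₀ ⋃₀ σ) Q))
termination_by o
decreasing_by exact h

/-- The `q`-reduction `σ_q^ℚ = {⟨τ_q^ℚ, r⟩ | r ∈ ℚ ∧ ∃a (⟨τ,a⟩ ∈ σ ∧ ∀ s ≤ q,r (s ≤* a))}`. -/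
def reduceName (S : Set ZFSet) (le : ZFSet → ZFSet → Prop) (Q q σ : ZFSet) : ZFSet :=
  reduceAux S le Q q σ.rank σ

/-! ### Projections -/

/-- `f` is a projection from `⟨S, le⟩` (with maximum `one`) onto the subforcing with domain
`Qs`, respecting `X`. -/
def IsProjectionResp (S : Set ZFSet) (le : ZFSet → ZFSet → Prop) (one : ZFSet)
    (Qs X : Set ZFSet) (f : ZFSet → ZFSet) : Prop :=
  (∀ p ∈ S, f p ∈ Qs) ∧
  f one = one ∧
  (∀ p ∈ S, ∀ q ∈ S, le p q → le (f p) (f q)) ∧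
  (∀ p ∈ S, ∀ q ∈ Qs, le q (f p) → ∃ r ∈ S, le r p ∧ le (f r) q) ∧
  (∀ p ∈ X, ∀ q ∈ S, le (f q) p → le q p) ∧
  (∀ p ∈ X, f p = p)

/-- `ℙ` is approachable by projections: there is a class `Π ∈ 𝒞` whose sections `π_{X,y}`
are such that for every set `X ⊆ ℙ` there are a set `y` and a set-sized subforcing `ℚ ⊇ X ∪ {𝟙}`
of `ℙ` with `π_{X,y} : ℙ → ℚ` a projection respecting `X`. -/
def ApproachableByProjections (𝕄 : GBModel) (F : ClassForcing 𝕄) : Prop :=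
  ∃ Pi ∈ 𝕄.Cls, ∀ X : ZFSet, X ∈ 𝕄.M → (∀ x : ZFSet, x ∈ X → x ∈ F.P) →
    ∃ y ∈ 𝕄.M, ∃ Q : ZFSet, Q ∈ 𝕄.M ∧ Q.toSet ⊆ F.P ∧ (∀ x : ZFSet, x ∈ X → x ∈ Q) ∧
      F.one ∈ Q ∧ ∃ f : ZFSet → ZFSet,
        (∀ u ∈ F.P, ∀ v : ZFSet, (f u = v ↔ X.pair (y.pair (u.pair v)) ∈ Pi)) ∧
        IsProjectionResp F.P F.le F.one Q.toSet X.toSet f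

/-- `p ⊩ σ ⊆ τ` for the forcing with domain `S` and ordering `le`. -/
def ForcesSubset (𝕄 : GBModel) (S : Set ZFSet) (le : ZFSet → ZFSet → Prop)
    (p σ τ : ZFSet) : Prop :=
  ∀ G : Set ZFSet, IsGeneric 𝕄 S le G → p ∈ G → nameEval G σ ⊆ nameEval G τ

/-! ### Bounded names, turning proper classes into sets -/

/-- The possible values of the name `σ` in generic extensions. -/
def PossibleValues (𝕄 : GBModel) (S : Set ZFSet) (le : ZFSet → ZFSet → Prop)
    (σ : ZFSet) : Set ZFSet :=
  {x | ∃ G : Set ZFSet, IsGeneric 𝕄 S le G ∧ nameEval G σ = x}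

/-- The name `σ` is bounded: some `A ∈ M` covers all its possible values lying in `M`. -/
def IsBoundedName (𝕄 : GBModel) (F : ClassForcing 𝕄) (σ : ZFSet) : Prop :=
  ∃ A ∈ 𝕄.M, PossibleValues 𝕄 F.P F.le σ ∩ 𝕄.M ⊆ A.toSet

/-- `ℙ` has bounded names: every `ℙ`-name in `M` is bounded. -/
def HasBoundedNames (𝕄 : GBModel) (F : ClassForcing 𝕄) : Prop :=
  ∀ σ : ZFSet, σ ∈ 𝕄.M → IsName F.P σ → IsBoundedName 𝕄 F σ

/-- `X` is a proper class of `𝕄`: a class of `𝕄` that is not (the extension of) a set of `𝕄`. -/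
def IsProperClass (𝕄 : GBModel) (X : Set ZFSet) : Prop :=
  X ∈ 𝕄.Cls ∧ ¬ ∃ x ∈ 𝕄.M, x.toSet = X

/-- The proper class `X` of `𝕄` is turned into a set by forcing with `ℙ`: some `ℙ`-name in `M`
evaluates to `X` under some generic filter. -/
def TurnsIntoSet (𝕄 : GBModel) (F : ClassForcing 𝕄) (X : Set ZFSet) : Prop :=
  ∃ σ : ZFSet, σ ∈ 𝕄.M ∧ IsName F.P σ ∧
    ∃ G : Set ZFSet, IsGeneric 𝕄 F.P F.le G ∧ (nameEval G σ).toSet = X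

/-! ### Functions and partial functions as sets, collapse forcings -/

/-- `p` is a partial function from (a subset of) `γ` into the class `Y`. -/
def IsPFunOn (p γ : ZFSet) (Y : Set ZFSet) : Prop :=
  (∀ x : ZFSet, x ∈ p → ∃ a b : ZFSet, x = a.pair b ∧ a ∈ γ ∧ b ∈ Y) ∧
  ∀ a b b' : ZFSet, a.pair b ∈ p → a.pair b' ∈ p → b = b'

/-- The domain of a set of pairs. -/
def pdom (p : ZFSet) : Set ZFSet := {a | ∃ b : ZFSet, a.pair b ∈ p}

/-- `f` is (the graph of) an injective function from `X` into `Y`. -/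
def ZInjFun (f : ZFSet) (X Y : Set ZFSet) : Prop :=
  (∀ x : ZFSet, x ∈ f → ∃ a b : ZFSet, x = a.pair b ∧ a ∈ X ∧ b ∈ Y) ∧
  (∀ a b b' : ZFSet, a.pair b ∈ f → a.pair b' ∈ f → b = b') ∧
  (∀ a ∈ X, ∃ b : ZFSet, a.pair b ∈ f) ∧
  (∀ a a' b : ZFSet, a.pair b ∈ f → a'.pair b ∈ f → a = a')

/-- `D` has size less than the cardinality of `γ` in the sense of `M`:
no function of `M` injects `γ` into `D`. -/
def SmallerThan (𝕄 : GBModel) (γ : ZFSet) (D : Set ZFSet) : Prop :=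
  ¬ ∃ f ∈ 𝕄.M, ZInjFun f γ.toSet D

/-- Conditions of `Col(γ, Y)^M`: partial functions of `M` from `γ` to `Y` whose domain has
size less than the cardinality of `γ` in `M`. -/
def ColCond (𝕄 : GBModel) (γ : ZFSet) (Y : Set ZFSet) (p : ZFSet) : Prop :=
  p ∈ 𝕄.M ∧ IsPFunOn p γ Y ∧ SmallerThan 𝕄 γ (pdom p)

/-- Conditions of `Col₋*(γ, Y)^M`: those conditions of `Col(γ, Y)^M` whose domain is
an ordinal. -/
def ColStarCond (𝕄 : GBModel) (γ : ZFSet) (Y : Set ZFSet) (p : ZFSet) : Prop :=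
  ColCond 𝕄 γ Y p ∧ ∃ β : ZFSet, β.IsOrdinal ∧ pdom p = β.toSet

/-- `f` is (the graph of) a function with domain `I`. -/
def ZFuncOn (f I : ZFSet) : Prop :=
  (∀ x : ZFSet, x ∈ f → ∃ a b : ZFSet, x = a.pair b ∧ a ∈ I) ∧
  (∀ a b b' : ZFSet, a.pair b ∈ f → a.pair b' ∈ f → b = b') ∧
  (∀ a : ZFSet, a ∈ I → ∃ b : ZFSet, a.pair b ∈ f)

/-- Application of a set-function to an argument (junk value `∅` if undefined). -/
def zapp (f i : ZFSet) : ZFSet :=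
  if h : ∃ b : ZFSet, i.pair b ∈ f then h.choose else ∅

/-! ### Pretameness -/

/-- `ℙ` is pretame for `𝕄`: for every `p ∈ ℙ`, `I ∈ M` and every `𝒞`-coded sequence
`⟨D_i | i ∈ I⟩` (coded as the class of pairs `⟨i, x⟩` with `x ∈ D_i`) of dense subclasses
of `ℙ`, there are `q ≤ p` and `⟨d_i | i ∈ I⟩ ∈ M` with `d_i ⊆ D_i` predense below `q`. -/
def Pretame (𝕄 : GBModel) (F : ClassForcing 𝕄) : Prop :=
  ∀ p ∈ F.P, ∀ I : ZFSet, I ∈ 𝕄.M → ∀ D ∈ 𝕄.Cls,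
    (∀ i : ZFSet, i ∈ I →
      (∀ x : ZFSet, i.pair x ∈ D → x ∈ F.P) ∧ ∀ r ∈ F.P, ∃ s : ZFSet, i.pair s ∈ D ∧ F.le s r) →
    ∃ q ∈ F.P, F.le q p ∧ ∃ d ∈ 𝕄.M, ZFuncOn d I ∧
      ∀ i : ZFSet, i ∈ I → (∀ x : ZFSet, x ∈ zapp d i → i.pair x ∈ D) ∧
        ∀ r ∈ F.P, F.le r q → ∃ a : ZFSet, a ∈ zapp d i ∧ Compat F.P F.le r a

/-! ### The specific forcings of Sections 6 and 7 -/

/-- Conditions of Definition 6.8: (not necessarily finite) partial functions from `ω` to `2`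
lying in `M`. -/
def PCond (𝕄 : GBModel) (p : ZFSet) : Prop :=
  p ∈ 𝕄.M ∧ IsPFunOn p ZFSet.omega {x : ZFSet | x = ∅ ∨ x = ({∅} : ZFSet)}

/-- Conditions of the finite support product `ℚ` of `ω` many copies of `ℙ`:
finite sequences `⟨p₀, …, p_k⟩` of `ℙ`-conditions. -/
def QCond (𝕄 : GBModel) (s : ZFSet) : Prop :=
  s ∈ 𝕄.M ∧ ∃ n : ZFSet, n ∈ ZFSet.omega ∧ ZFuncOn s n ∧
    ∀ i : ZFSet, i ∈ n → PCond 𝕄 (zapp s i)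

/-- The coordinatewise ordering on `ℚ`. -/
def QLe (s' s : ZFSet) : Prop :=
  pdom s ⊆ pdom s' ∧ ∀ i ∈ pdom s, zapp s i ⊆ zapp s' i

/-- The power class `𝒫(ω)^M`. -/
def PowOmega (𝕄 : GBModel) : Set ZFSet :=
  {x : ZFSet | x ∈ 𝕄.M ∧ x ⊆ ZFSet.omega}

/-- `X ⊆ M` is definable over `⟨M, ∈⟩` (from set parameters). -/
def DefinableOver (Mset : Set ZFSet) (X : Set ZFSet) : Prop :=
  ∃ (φ : EFormula) (v : ℕ → ZFSet), (∀ n, v n ∈ Mset) ∧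
    X = {x : ZFSet | x ∈ Mset ∧ EFormula.Sat Mset (Function.update v 0 x) φ}

/-- Every set of `M` is countable in `M`: it injects into `ω` by a function of `M`. -/
def AllSetsCountable (𝕄 : GBModel) : Prop :=
  ∀ x ∈ 𝕄.M, ∃ f ∈ 𝕄.M, ZInjFun f x.toSet ZFSet.omega.toSet

/-!
Let `X = σ^G`. For `y ∈ M` the relation `s ⊩ ρ = y` is first-order definable over `𝕄`, because it
is witnessed by a set of triples `⟨π, z, t⟩` (read `t ⊩ π = z`) each of which follows in one step
from others in the set. Induction on names shows that what a condition in `G` forces is true.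
Conversely, if `ρ^G ∈ M` then some condition in `G` forces the value of `ρ`: by pretameness there
is a condition in `G` below which the values of all the names in `ρ` are decided by a set of
conditions, so that these decisions can be collected into one witness. Since `X ⊆ M`, the same
argument gives a set of conditions in `M` deciding the names in `σ`, and collection turns it into
some `b ∈ M` containing the value of every name that enters `σ^G`. Thus `X ⊆ b`, and `X` is a set
by separation.
-/

section Development

universe u

variable {𝕄 : GBModel.{u}}

/-! ### Closure properties of the model -/

theorem fst_mem_sUnion_sUnion {x y a : ZFSet.{u}} (h : x.pair y ∈ a) : x ∈ ⋃₀ ⋃₀ a :=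
  ZFSet.mem_sUnion_of_mem (ZFSet.mem_singleton.2 rfl)
    (ZFSet.mem_sUnion_of_mem (ZFSet.mem_pair.2 (.inl rfl)) h)

theorem snd_mem_sUnion_sUnion {x y a : ZFSet.{u}} (h : x.pair y ∈ a) : y ∈ ⋃₀ ⋃₀ a :=
  ZFSet.mem_sUnion_of_mem (ZFSet.mem_pair.2 (.inr rfl))
    (ZFSet.mem_sUnion_of_mem (ZFSet.mem_pair.2 (.inr rfl)) h)

namespace GBModel

theorem singleton_mem {x : ZFSet.{u}} (hx : x ∈ 𝕄.M) : ({x} : ZFSet.{u}) ∈ 𝕄.M := by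
  simpa only [ZFSet.pair_eq_singleton] using 𝕄.pair_mem x hx x hx

theorem union_mem {x y : ZFSet.{u}} (hx : x ∈ 𝕄.M) (hy : y ∈ 𝕄.M) : x ∪ y ∈ 𝕄.M :=
  𝕄.sUnion_mem _ (𝕄.pair_mem x hx y hy)

theorem insert_mem {x y : ZFSet.{u}} (hx : x ∈ 𝕄.M) (hy : y ∈ 𝕄.M) : insert x y ∈ 𝕄.M := by
  have h_eq : insert x y = {x} ∪ y := by ext; simp
  exact h_eq ▸ union_mem (singleton_mem hx) hy

theorem orderedPair_mem {x y : ZFSet.{u}} (hx : x ∈ 𝕄.M) (hy : y ∈ 𝕄.M) : x.pair y ∈ 𝕄.M :=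
  𝕄.pair_mem _ (singleton_mem hx) _ (𝕄.pair_mem x hx y hy)

theorem fst_mem_of_pair_mem {x y a : ZFSet.{u}} (ha : a ∈ 𝕄.M) (h : x.pair y ∈ a) : x ∈ 𝕄.M :=
  𝕄.transitive _ (𝕄.sUnion_mem _ (𝕄.sUnion_mem a ha)) x (fst_mem_sUnion_sUnion h)

theorem snd_mem_of_pair_mem {x y a : ZFSet.{u}} (ha : a ∈ 𝕄.M) (h : x.pair y ∈ a) : y ∈ 𝕄.M :=
  𝕄.transitive _ (𝕄.sUnion_mem _ (𝕄.sUnion_mem a ha)) y (snd_mem_sUnion_sUnion h)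

theorem mem_of_orderedPair_mem {x y : ZFSet.{u}} (h : x.pair y ∈ 𝕄.M) : x ∈ 𝕄.M ∧ y ∈ 𝕄.M :=
  ⟨fst_mem_of_pair_mem (singleton_mem h) (ZFSet.mem_singleton.2 rfl),
    snd_mem_of_pair_mem (singleton_mem h) (ZFSet.mem_singleton.2 rfl)⟩

end GBModel

/-! ### Definable relations -/

/-- The relations on `M` that are first-order definable over `𝕄` with class parameters, presented
as predicates closed under the formation rules of formulas (de Bruijn style: a quantifier binds the
last variable). Only the values at tuples from `M` matter, whence `of_iff`. -/
inductive DefinableRel (𝕄 : GBModel.{u}) : {n : ℕ} → ((Fin n → ZFSet.{u}) → Prop) → Prop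
  | var_mem_var {n : ℕ} (i j : Fin n) : DefinableRel 𝕄 fun v => v i ∈ v j
  | var_eq_var {n : ℕ} (i j : Fin n) : DefinableRel 𝕄 fun v => v i = v j
  | var_mem_class {n : ℕ} (i : Fin n) {C : Set ZFSet.{u}} (hC : C ∈ 𝕄.Cls) :
      DefinableRel 𝕄 fun v => v i ∈ C
  | not {n : ℕ} {R : (Fin n → ZFSet.{u}) → Prop} :
      DefinableRel 𝕄 R → DefinableRel 𝕄 fun v => ¬ R v
  | or {n : ℕ} {R S : (Fin n → ZFSet.{u}) → Prop} :
      DefinableRel 𝕄 R → DefinableRel 𝕄 S → DefinableRel 𝕄 fun v => R v ∨ S v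
  | exists_snoc {n : ℕ} {R : (Fin (n + 1) → ZFSet.{u}) → Prop} :
      DefinableRel 𝕄 R →
      DefinableRel 𝕄 fun v : Fin n → ZFSet.{u} => ∃ x ∈ 𝕄.M, R (Fin.snoc (α := fun _ => ZFSet) v x)
  | of_iff {n : ℕ} {R S : (Fin n → ZFSet.{u}) → Prop} :
      DefinableRel 𝕄 R → (∀ v, (∀ i, v i ∈ 𝕄.M) → (R v ↔ S v)) → DefinableRel 𝕄 S

theorem update_mem {ι : Type*} [DecidableEq ι] {A : Set ZFSet.{u}} {v : ι → ZFSet.{u}}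
    (hv : ∀ i, v i ∈ A) (i : ι) {x : ZFSet.{u}} (hx : x ∈ A) (j : ι) :
    Function.update v i x j ∈ A :=
  (Function.forall_update_iff v fun _ y => y ∈ A).2 ⟨hx, fun j _ => hv j⟩ j

theorem snoc_eq_update {α : Type*} {n : ℕ} (v : ℕ → α) (x : α) :
    Fin.snoc (α := fun _ => α) (fun i : Fin n => v i) x =
      fun i : Fin (n + 1) => Function.update v n x i := by
  funext i
  refine Fin.lastCases ?_ (fun j => ?_) i
  · simp
  · simp [Function.update_of_ne j.isLt.ne]

namespace DefinableRel

variable {n : ℕ} {R S : (Fin n → ZFSet.{u}) → Prop}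
  {T T' : (Fin n → ZFSet.{u}) → ZFSet.{u} → Prop}

theorem exists_formula (hR : DefinableRel 𝕄 R) (Cs : ℕ → Set ZFSet.{u})
    (hCs : 𝕄.Cls ⊆ Set.range Cs) :
    ∃ φ : GBFormula, ∀ v : ℕ → ZFSet.{u}, (∀ k, v k ∈ 𝕄.M) →
      (R (fun i => v i) ↔ φ.Sat 𝕄.M Cs v) := by
  induction hR with
  | var_mem_var i j => exact ⟨.mem i j, fun _ _ => Iff.rfl⟩
  | var_eq_var i j => exact ⟨.eq i j, fun _ _ => Iff.rfl⟩
  | var_mem_class i hC =>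
    obtain ⟨k, rfl⟩ := hCs hC
    exact ⟨.cls i k, fun _ _ => Iff.rfl⟩
  | not _ ih =>
    obtain ⟨φ, hφ⟩ := ih
    exact ⟨.not φ, fun v hv => not_congr (hφ v hv)⟩
  | or _ _ ihR ihS =>
    obtain ⟨φ, hφ⟩ := ihR
    obtain ⟨ψ, hψ⟩ := ihS
    exact ⟨.or φ ψ, fun v hv => or_congr (hφ v hv) (hψ v hv)⟩
  | @exists_snoc n R _ ih =>
    obtain ⟨φ, hφ⟩ := ih
    refine ⟨.ex n φ, fun v hv => exists_congr fun x => and_congr_right fun hx => ?_⟩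
    rw [snoc_eq_update]
    exact hφ _ (update_mem hv n hx)
  | of_iff _ hRS ih =>
    obtain ⟨φ, hφ⟩ := ih
    exact ⟨φ, fun v hv => (hRS _ fun i => hv i).symm.trans (hφ v hv)⟩

theorem setOf_mem_Cls {R : ZFSet.{u} → Prop}
    (hR : DefinableRel 𝕄 fun v : Fin 1 → ZFSet.{u} => R (v 0)) :
    {x | x ∈ 𝕄.M ∧ R x} ∈ 𝕄.Cls := by
  obtain ⟨Cs, hCs⟩ :=
    𝕄.countable_Cls.exists_eq_range ⟨_, 𝕄.sets_are_classes _ 𝕄.empty_mem⟩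
  obtain ⟨φ, hφ⟩ := hR.exists_formula Cs hCs.le
  have h_class := 𝕄.comprehension φ (fun _ => ∅) Cs (fun _ => 𝕄.empty_mem)
    (fun k => hCs ▸ Set.mem_range_self k)
  convert h_class using 3 with x
  refine and_congr_right fun hx => ?_
  rw [← hφ _ (update_mem (fun _ => 𝕄.empty_mem) 0 hx)]
  simp

theorem rename (hR : DefinableRel 𝕄 R) {m : ℕ} (f : Fin n → Fin m) :
    DefinableRel 𝕄 fun v => R fun i => v (f i) := by
  induction hR generalizing m with
  | var_mem_var i j => exact .var_mem_var _ _
  | var_eq_var i j => exact .var_eq_var _ _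
  | var_mem_class i hC => exact .var_mem_class _ hC
  | not _ ih => exact .not (ih f)
  | or _ _ ihR ihS => exact .or (ihR f) (ihS f)
  | @exists_snoc n R _ ih =>
    let lift : Fin (n + 1) → Fin (m + 1) :=
      Fin.snoc (α := fun _ => Fin (m + 1)) (fun i => (f i).castSucc) (Fin.last m)
    refine (exists_snoc (ih lift)).of_iff fun v _ => exists_congr fun x => ?_
    have h_lift : (fun i => Fin.snoc (α := fun _ => ZFSet) v x (lift i)) =
        Fin.snoc (α := fun _ => ZFSet) (fun i => v (f i)) x := by
      funext i
      refine Fin.lastCases ?_ (fun j => ?_) i <;> simp [lift]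
    rw [h_lift]
  | of_iff _ hRS ih => exact (ih f).of_iff fun v hv => hRS _ fun i => hv _

theorem and (hR : DefinableRel 𝕄 R) (hS : DefinableRel 𝕄 S) :
    DefinableRel 𝕄 fun v => R v ∧ S v :=
  (hR.not.or hS.not).not.of_iff fun _ _ => by tauto

theorem imp (hR : DefinableRel 𝕄 R) (hS : DefinableRel 𝕄 S) :
    DefinableRel 𝕄 fun v => R v → S v :=
  (hR.not.or hS).of_iff fun _ _ => by tauto

theorem exists_mem_M
    (hT : DefinableRel 𝕄 fun w => T (fun i => w i.castSucc) (w (Fin.last n))) :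
    DefinableRel 𝕄 fun v => ∃ x ∈ 𝕄.M, T v x :=
  hT.exists_snoc.of_iff fun _ _ => by simp

theorem exists_of_imp_mem_M
    (hT : DefinableRel 𝕄 fun w => T (fun i => w i.castSucc) (w (Fin.last n)))
    (hM : ∀ v, (∀ i, v i ∈ 𝕄.M) → ∀ x, T v x → x ∈ 𝕄.M) :
    DefinableRel 𝕄 fun v => ∃ x, T v x :=
  hT.exists_mem_M.of_iff fun v hv => exists_congr fun x => and_iff_right_of_imp (hM v hv x)

theorem forall_of_imp_mem_M
    (hT : DefinableRel 𝕄 fun w => T (fun i => w i.castSucc) (w (Fin.last n)))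
    (hT' : DefinableRel 𝕄 fun w => T' (fun i => w i.castSucc) (w (Fin.last n)))
    (hM : ∀ v, (∀ i, v i ∈ 𝕄.M) → ∀ x, T v x → x ∈ 𝕄.M) :
    DefinableRel 𝕄 fun v => ∀ x, T v x → T' v x :=
  (exists_of_imp_mem_M (T := fun v x => T v x ∧ ¬ T' v x) (hT.and hT'.not)
    fun v hv x hx => hM v hv x hx.1).not.of_iff fun _ _ => by simp

end DefinableRel

/-- The functions on `M` with definable graph, playing the role of terms substituted into
definable relations. -/
structure DefinableFun (𝕄 : GBModel.{u}) {n : ℕ} (t : (Fin n → ZFSet.{u}) → ZFSet.{u}) : Prop where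
  mem_M : ∀ v, (∀ i, v i ∈ 𝕄.M) → t v ∈ 𝕄.M
  definableRel_graph : DefinableRel 𝕄 fun w => w (Fin.last n) = t fun i => w i.castSucc

namespace DefinableFun

variable {n m : ℕ} {t s : (Fin n → ZFSet.{u}) → ZFSet.{u}}

theorem var (i : Fin n) : DefinableFun 𝕄 fun v => v i :=
  ⟨fun _ hv => hv i, .var_eq_var _ _⟩

theorem const {c : ZFSet.{u}} (hc : c ∈ 𝕄.M) : DefinableFun 𝕄 fun _ : Fin n → ZFSet.{u} => c :=
  ⟨fun _ _ => hc, (DefinableRel.var_mem_class (Fin.last n)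
    (𝕄.sets_are_classes _ (GBModel.singleton_mem hc))).of_iff fun _ _ => ZFSet.mem_singleton⟩

theorem rename (ht : DefinableFun 𝕄 t) (f : Fin n → Fin m) :
    DefinableFun 𝕄 fun v => t fun i => v (f i) where
  mem_M v hv := ht.mem_M _ fun i => hv (f i)
  definableRel_graph := by
    simpa using ht.definableRel_graph.rename
      (Fin.snoc (α := fun _ => Fin (m + 1)) (fun i => (f i).castSucc) (Fin.last m))

theorem subst (ht : DefinableFun 𝕄 t) {T : (Fin n → ZFSet.{u}) → ZFSet.{u} → Prop}
    (hT : DefinableRel 𝕄 fun w => T (fun i => w i.castSucc) (w (Fin.last n))) :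
    DefinableRel 𝕄 fun v => T v (t v) :=
  (DefinableRel.exists_of_imp_mem_M (T := fun v x => x = t v ∧ T v x)
    (ht.definableRel_graph.and hT) fun v hv _ hx => hx.1 ▸ ht.mem_M v hv).of_iff
    fun _ _ => exists_eq_left

end DefinableFun

namespace DefinableRel

variable {n : ℕ} {t s : (Fin n → ZFSet.{u}) → ZFSet.{u}}

theorem mem (ht : DefinableFun 𝕄 t) (hs : DefinableFun 𝕄 s) : DefinableRel 𝕄 fun v => t v ∈ s v :=
  ht.subst (T := fun v x => x ∈ s v)
    ((hs.rename Fin.castSucc).subst (T := fun w y => w (Fin.last n) ∈ y) (.var_mem_var _ _))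

theorem eq (ht : DefinableFun 𝕄 t) (hs : DefinableFun 𝕄 s) : DefinableRel 𝕄 fun v => t v = s v :=
  ht.subst (T := fun v x => x = s v) (hs.definableRel_graph)

theorem mem_class (ht : DefinableFun 𝕄 t) {C : Set ZFSet.{u}} (hC : C ∈ 𝕄.Cls) :
    DefinableRel 𝕄 fun v => t v ∈ C :=
  ht.subst (T := fun _ x => x ∈ C) (.var_mem_class _ hC)

theorem exists_mem (ht : DefinableFun 𝕄 t) {T : (Fin n → ZFSet.{u}) → ZFSet.{u} → Prop}
    (hT : DefinableRel 𝕄 fun w => T (fun i => w i.castSucc) (w (Fin.last n))) :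
    DefinableRel 𝕄 fun v => ∃ x ∈ t v, T v x :=
  exists_of_imp_mem_M (T := fun v x => x ∈ t v ∧ T v x) ((mem (.var _) (ht.rename _)).and hT)
    fun v hv x hx => 𝕄.transitive _ (ht.mem_M v hv) x hx.1

theorem forall_mem (ht : DefinableFun 𝕄 t) {T : (Fin n → ZFSet.{u}) → ZFSet.{u} → Prop}
    (hT : DefinableRel 𝕄 fun w => T (fun i => w i.castSucc) (w (Fin.last n))) :
    DefinableRel 𝕄 fun v => ∀ x ∈ t v, T v x :=
  forall_of_imp_mem_M (mem (.var _) (ht.rename _)) hT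
    fun v hv x hx => 𝕄.transitive _ (ht.mem_M v hv) x hx

end DefinableRel

namespace DefinableFun

variable {n : ℕ} {t s : (Fin n → ZFSet.{u}) → ZFSet.{u}}

theorem unorderedPair (ht : DefinableFun 𝕄 t) (hs : DefinableFun 𝕄 s) :
    DefinableFun 𝕄 fun v => {t v, s v} where
  mem_M v hv := 𝕄.pair_mem _ (ht.mem_M v hv) _ (hs.mem_M v hv)
  definableRel_graph := by
    have h_def : DefinableRel 𝕄 fun w : Fin (n + 1) → ZFSet.{u} =>
        t (fun i => w i.castSucc) ∈ w (Fin.last n) ∧ s (fun i => w i.castSucc) ∈ w (Fin.last n) ∧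
          ∀ x ∈ w (Fin.last n), x = t (fun i => w i.castSucc) ∨ x = s (fun i => w i.castSucc) :=
      (DefinableRel.mem (ht.rename _) (.var _)).and <|
        (DefinableRel.mem (hs.rename _) (.var _)).and <|
          .forall_mem (.var _) <| (DefinableRel.eq (.var _) (ht.rename _)).or
            (DefinableRel.eq (.var _) (hs.rename _))
    refine h_def.of_iff fun w _ => ?_
    rw [ZFSet.ext_iff]
    simp only [ZFSet.mem_pair]
    grind

theorem singleton (ht : DefinableFun 𝕄 t) : DefinableFun 𝕄 fun v => ({t v} : ZFSet.{u}) := by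
  simpa only [ZFSet.pair_eq_singleton] using ht.unorderedPair ht

theorem pair (ht : DefinableFun 𝕄 t) (hs : DefinableFun 𝕄 s) :
    DefinableFun 𝕄 fun v => (t v).pair (s v) :=
  ht.singleton.unorderedPair (ht.unorderedPair hs)

end DefinableFun

namespace DefinableRel

section PairQuantifiers

variable {n : ℕ} {t : (Fin n → ZFSet.{u}) → ZFSet.{u}}
  {T : (Fin n → ZFSet.{u}) → ZFSet.{u} → ZFSet.{u} → Prop}

theorem exists_pair_mem (ht : DefinableFun 𝕄 t)
    (hT : DefinableRel 𝕄 fun w : Fin (n + 2) → ZFSet.{u} =>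
      T (fun i => w i.castSucc.castSucc) (w (Fin.last n).castSucc) (w (Fin.last (n + 1)))) :
    DefinableRel 𝕄 fun v => ∃ x y, x.pair y ∈ t v ∧ T v x y :=
  exists_of_imp_mem_M
    (exists_of_imp_mem_M ((mem (.pair (.var _) (.var _)) (ht.rename _)).and hT)
      fun _ hw _ hy => GBModel.snd_mem_of_pair_mem (ht.mem_M _ fun i => hw i.castSucc) hy.1)
    fun v hv _ ⟨_, hx⟩ => GBModel.fst_mem_of_pair_mem (ht.mem_M v hv) hx.1

theorem forall_pair_mem (ht : DefinableFun 𝕄 t)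
    (hT : DefinableRel 𝕄 fun w : Fin (n + 2) → ZFSet.{u} =>
      T (fun i => w i.castSucc.castSucc) (w (Fin.last n).castSucc) (w (Fin.last (n + 1)))) :
    DefinableRel 𝕄 fun v => ∀ x y, x.pair y ∈ t v → T v x y :=
  (exists_pair_mem (T := fun v x y => ¬ T v x y) ht hT.not).not.of_iff fun _ _ => by simp

end PairQuantifiers

variable {R : ZFSet.{u} → ZFSet.{u} → Prop}

theorem exists_mem_Cls_pair_mem_iff
    (hR : DefinableRel 𝕄 fun v : Fin 2 → ZFSet.{u} => R (v 0) (v 1)) :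
    ∃ C ∈ 𝕄.Cls, ∀ x ∈ 𝕄.M, ∀ y ∈ 𝕄.M, (x.pair y ∈ C ↔ R x y) := by
  have h_def : DefinableRel 𝕄 fun v : Fin 1 → ZFSet.{u} =>
      ∃ x ∈ 𝕄.M, ∃ y ∈ 𝕄.M, v 0 = x.pair y ∧ R x y :=
    exists_mem_M <| exists_mem_M <| (eq (.var _) (.pair (.var _) (.var _))).and (hR.rename ![1, 2])
  refine ⟨_, h_def.setOf_mem_Cls (R := fun z => ∃ x ∈ 𝕄.M, ∃ y ∈ 𝕄.M, z = x.pair y ∧ R x y),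
    fun x hx y hy => ⟨?_, fun h => ⟨GBModel.orderedPair_mem hx hy, x, hx, y, hy, rfl, h⟩⟩⟩
  rintro ⟨_, x', _, y', _, h_eq, h⟩
  obtain ⟨rfl, rfl⟩ := ZFSet.pair_inj.1 h_eq
  exact h

theorem exists_sep {R : ZFSet.{u} → Prop}
    (hR : DefinableRel 𝕄 fun v : Fin 1 → ZFSet.{u} => R (v 0)) {a : ZFSet.{u}} (ha : a ∈ 𝕄.M) :
    ∃ b ∈ 𝕄.M, ∀ x, x ∈ b ↔ x ∈ a ∧ R x := by
  obtain ⟨b, hb, h⟩ := 𝕄.separation _ hR.setOf_mem_Cls a ha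
  exact ⟨b, hb, fun x => (h x).trans <| and_congr_right fun hx =>
    and_iff_right (𝕄.transitive a ha x hx)⟩

theorem exists_collect (hR : DefinableRel 𝕄 fun v : Fin 2 → ZFSet.{u} => R (v 0) (v 1))
    {a : ZFSet.{u}} (ha : a ∈ 𝕄.M) :
    ∃ b ∈ 𝕄.M, ∀ x ∈ a, (∃ y ∈ 𝕄.M, R x y) → ∃ y ∈ b, R x y := by
  have h_dom : DefinableRel 𝕄 fun v : Fin 1 → ZFSet.{u} => ∃ y ∈ 𝕄.M, R (v 0) y :=
    exists_mem_M (hR.rename ![0, 1])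
  obtain ⟨a', ha', mem_a'⟩ := h_dom.exists_sep (R := fun x => ∃ y ∈ 𝕄.M, R x y) ha
  obtain ⟨C, hC, mem_C⟩ := hR.exists_mem_Cls_pair_mem_iff
  have pair_mem_C : ∀ x ∈ a', ∀ y ∈ 𝕄.M, (x.pair y ∈ C ↔ R x y) :=
    fun x hx => mem_C x (𝕄.transitive a' ha' x hx)
  obtain ⟨b, hb, h⟩ := 𝕄.collection C hC a' ha' fun x hx =>
    have ⟨y, hy, hxy⟩ := ((mem_a' x).1 hx).2
    ⟨y, hy, (pair_mem_C x hx y hy).2 hxy⟩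
  refine ⟨b, hb, fun x hx hy => ?_⟩
  have hxa' := (mem_a' x).2 ⟨hx, hy⟩
  obtain ⟨y, hyb, hxy⟩ := h x hxa'
  exact ⟨y, hyb, (pair_mem_C x hxa' y (𝕄.transitive b hb y hyb)).1 hxy⟩

end DefinableRel

namespace GBModel

theorem exists_forall_pair_mem {a b : ZFSet.{u}} (ha : a ∈ 𝕄.M) (hb : b ∈ 𝕄.M) :
    ∃ c ∈ 𝕄.M, ∀ x ∈ a, ∀ y ∈ b, x.pair y ∈ c := by
  have exists_row : ∀ x ∈ a, ∃ c ∈ 𝕄.M, ∀ y ∈ b, x.pair y ∈ c := fun x hx => by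
    have hxM := 𝕄.transitive a ha x hx
    have h_def : DefinableRel 𝕄 fun v : Fin 2 → ZFSet.{u} => v 1 = x.pair (v 0) :=
      .eq (.var _) (.pair (.const hxM) (.var _))
    obtain ⟨c, hc, h⟩ := h_def.exists_collect (R := fun y z => z = x.pair y) hb
    exact ⟨c, hc, fun y hy => by
      simpa using h y hy ⟨_, orderedPair_mem hxM (𝕄.transitive b hb y hy), rfl⟩⟩
  have h_def : DefinableRel 𝕄 fun v : Fin 2 → ZFSet.{u} => ∀ y ∈ b, (v 0).pair y ∈ v 1 :=
    .forall_mem (.const hb) (.mem (.pair (.var _) (.var _)) (.var _))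
  obtain ⟨d, hd, h⟩ := h_def.exists_collect (R := fun x c => ∀ y ∈ b, x.pair y ∈ c) ha
  refine ⟨⋃₀ d, 𝕄.sUnion_mem d hd, fun x hx y hy => ?_⟩
  obtain ⟨c, hc, hxc⟩ := h x hx (exists_row x hx)
  exact ZFSet.mem_sUnion_of_mem (hxc y hy) hc

end GBModel

/-! ### Conditions, density and generic filters -/

namespace ClassForcing

/-- The order of `F` restricted to the conditions; unlike the bare relation `F.le` it is a class
of `𝕄`. -/
def Extends (F : ClassForcing 𝕄) (p q : ZFSet.{u}) : Prop := p ∈ F.P ∧ q ∈ F.P ∧ F.le p q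

/-- Compatibility of conditions; it fails when `p` or `q` is not a condition. -/
def Compatible (F : ClassForcing 𝕄) (p q : ZFSet.{u}) : Prop :=
  ∃ r, F.Extends r p ∧ F.Extends r q

/-- The conditions satisfying `R` are dense below `s`. -/
def DenseBelow (F : ClassForcing 𝕄) (s : ZFSet.{u}) (R : ZFSet.{u} → Prop) : Prop :=
  ∀ r, F.Extends r s → ∃ r', F.Extends r' r ∧ R r'

variable {F : ClassForcing 𝕄} {p q r s : ZFSet.{u}} {R S : ZFSet.{u} → Prop}

theorem mem_M_of_mem_P (hp : p ∈ F.P) : p ∈ 𝕄.M := 𝕄.classes_sub _ F.P_cls hp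

theorem Extends.refl (hp : p ∈ F.P) : F.Extends p p := ⟨hp, hp, F.le_refl p hp⟩

theorem Extends.trans (hpq : F.Extends p q) (hqr : F.Extends q r) : F.Extends p r :=
  ⟨hpq.1, hqr.2.1, F.le_trans p q r hpq.2.2 hqr.2.2⟩

theorem Extends.mem_M (h : F.Extends p q) : p ∈ 𝕄.M := mem_M_of_mem_P h.1

theorem Compatible.mono_left (h : F.Compatible p r) (hpq : F.Extends p q) : F.Compatible q r :=
  let ⟨x, hxp, hxr⟩ := h
  ⟨x, hxp.trans hpq, hxr⟩

theorem DenseBelow.of_extends (h : F.DenseBelow q R) (hpq : F.Extends p q) : F.DenseBelow p R :=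
  fun r hr => h r (hr.trans hpq)

theorem DenseBelow.imp (h : F.DenseBelow s R) (hRS : ∀ r, R r → S r) : F.DenseBelow s S :=
  fun r hr =>
    let ⟨r', hr', hR⟩ := h r hr
    ⟨r', hr', hRS r' hR⟩

theorem DenseBelow.exists_or_not_compatible (h : F.DenseBelow s R) (hp : p ∈ F.P) :
    ∃ r, F.Extends r p ∧ (R r ∨ ¬ F.Compatible r s) := by
  by_cases hps : F.Compatible p s
  · obtain ⟨r, hrp, hrs⟩ := hps
    obtain ⟨r', hr'r, hR⟩ := h r hrs
    exact ⟨r', hr'r.trans hrp, .inl hR⟩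
  · exact ⟨p, .refl hp, .inr hps⟩

section Definability

variable {n : ℕ} {t t' : (Fin n → ZFSet.{u}) → ZFSet.{u}}

theorem definableRel_extends (ht : DefinableFun 𝕄 t) (ht' : DefinableFun 𝕄 t') :
    DefinableRel 𝕄 fun v => F.Extends (t v) (t' v) :=
  (DefinableRel.mem_class (ht.pair ht') F.le_cls).of_iff fun v _ => by
    simp only [Set.mem_ofPred_eq, ZFSet.pair_inj, Extends]
    grind

theorem definableRel_compatible (ht : DefinableFun 𝕄 t) (ht' : DefinableFun 𝕄 t') :
    DefinableRel 𝕄 fun v => F.Compatible (t v) (t' v) :=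
  .exists_of_imp_mem_M
    ((definableRel_extends (.var _) (ht.rename _)).and
      (definableRel_extends (.var _) (ht'.rename _)))
    fun _ _ _ hx => hx.1.mem_M

theorem definableRel_denseBelow (ht : DefinableFun 𝕄 t)
    {T : (Fin n → ZFSet.{u}) → ZFSet.{u} → Prop}
    (hT : DefinableRel 𝕄 fun w : Fin (n + 2) → ZFSet.{u} =>
      T (fun i => w i.castSucc.castSucc) (w (Fin.last (n + 1)))) :
    DefinableRel 𝕄 fun v => F.DenseBelow (t v) (T v) :=
  .forall_of_imp_mem_M (definableRel_extends (.var _) (ht.rename _))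
    (.exists_of_imp_mem_M ((definableRel_extends (.var _) (.var _)).and hT)
      fun _ _ _ hx => hx.1.mem_M)
    fun _ _ _ hx => hx.mem_M

end Definability

end ClassForcing

section Generic

open ClassForcing

variable {F : ClassForcing 𝕄} {G : Set ZFSet.{u}} {p q s a I : ZFSet.{u}}

namespace IsGeneric

theorem mem_P (hG : IsGeneric 𝕄 F.P F.le G) (hp : p ∈ G) : p ∈ F.P := hG.1.1 hp

theorem mem_of_extends (hG : IsGeneric 𝕄 F.P F.le G) (hp : p ∈ G) (hpq : F.Extends p q) : q ∈ G :=
  hG.1.2.2.1 p hp q hpq.2.1 hpq.2.2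

theorem exists_extends (hG : IsGeneric 𝕄 F.P F.le G) (hp : p ∈ G) (hq : q ∈ G) :
    ∃ r ∈ G, F.Extends r p ∧ F.Extends r q :=
  let ⟨r, hr, hrp, hrq⟩ := hG.1.2.2.2 p hp q hq
  ⟨r, hr, ⟨hG.mem_P hr, hG.mem_P hp, hrp⟩, ⟨hG.mem_P hr, hG.mem_P hq, hrq⟩⟩

theorem compatible (hG : IsGeneric 𝕄 F.P F.le G) (hp : p ∈ G) (hq : q ∈ G) : F.Compatible p q :=
  let ⟨r, _, h⟩ := hG.exists_extends hp hq
  ⟨r, h⟩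

theorem exists_mem_of_denseBelow (hG : IsGeneric 𝕄 F.P F.le G) (hs : s ∈ G)
    {R : ZFSet.{u} → Prop} (hR : DefinableRel 𝕄 fun v : Fin 1 → ZFSet.{u} => R (v 0))
    (hd : F.DenseBelow s R) : ∃ r ∈ G, R r := by
  have h_def : DefinableRel 𝕄 fun v : Fin 1 → ZFSet.{u} =>
      v 0 ∈ F.P ∧ (R (v 0) ∨ ¬ F.Compatible (v 0) s) :=
    (DefinableRel.mem_class (.var _) F.P_cls).and <|
      hR.or (definableRel_compatible (.var _) (.const (mem_M_of_mem_P (hG.mem_P hs)))).not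
  obtain ⟨r, hr, -, -, hRr⟩ := hG.2 _
      (h_def.setOf_mem_Cls (R := fun r => r ∈ F.P ∧ (R r ∨ ¬ F.Compatible r s)))
      ⟨fun _ hx => hx.2.1, fun p hp =>
        let ⟨r, hrp, hr⟩ := hd.exists_or_not_compatible hp
        ⟨r, ⟨hrp.mem_M, hrp.1, hr⟩, hrp.2.2⟩⟩
  exact ⟨r, hr, hRr.resolve_right fun h => h (hG.compatible hr hs)⟩

theorem exists_not_compatible (hG : IsGeneric 𝕄 F.P F.le G) (ha : a ∈ 𝕄.M) (haG : a ∉ G) :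
    ∃ g ∈ G, ¬ F.Compatible g a := by
  obtain ⟨s, hs⟩ := hG.1.2.1
  have h_def : DefinableRel 𝕄 fun v : Fin 1 → ZFSet.{u} =>
      F.Extends (v 0) a ∨ ¬ F.Compatible (v 0) a :=
    (definableRel_extends (.var _) (.const ha)).or
      (definableRel_compatible (.var _) (.const ha)).not
  obtain ⟨g, hg, hga⟩ := hG.exists_mem_of_denseBelow hs
    (R := fun r => F.Extends r a ∨ ¬ F.Compatible r a) h_def fun r hr => by
      by_cases hra : F.Compatible r a
      · obtain ⟨r', hr'r, hr'a⟩ := hra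
        exact ⟨r', hr'r, .inl hr'a⟩
      · exact ⟨r, .refl hr.1, .inr hra⟩
  exact ⟨g, hg, hga.resolve_left fun h => haG (hG.mem_of_extends hg h)⟩

theorem exists_mem_imp_of_compatible (hG : IsGeneric 𝕄 F.P F.le G) (ha : a ∈ 𝕄.M)
    {R : ZFSet.{u} → Prop} (h : a ∈ G → ∃ g ∈ G, R g) : ∃ g ∈ G, F.Compatible g a → R g := by
  by_cases haG : a ∈ G
  · obtain ⟨g, hg, hR⟩ := h haG
    exact ⟨g, hg, fun _ => hR⟩
  · obtain ⟨g, hg, hga⟩ := hG.exists_not_compatible ha haG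
    exact ⟨g, hg, fun h => absurd h hga⟩

end IsGeneric

/-! ### Pretameness -/

variable {E : ZFSet.{u} → ZFSet.{u} → Prop}

theorem pair_zapp_mem {f i : ZFSet.{u}} (hf : ZFuncOn f I) (hi : i ∈ I) :
    i.pair (zapp f i) ∈ f := by
  have h_ex := hf.2.2 i hi
  rw [zapp, dif_pos h_ex]
  exact h_ex.choose_spec

namespace Pretame

theorem exists_set_denseBelow (h : Pretame 𝕄 F) (hp : p ∈ F.P) (hI : I ∈ 𝕄.M)
    (hE : DefinableRel 𝕄 fun v : Fin 2 → ZFSet.{u} => E (v 0) (v 1))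
    (hd : ∀ i ∈ I, F.DenseBelow p (E i)) :
    ∃ q, F.Extends q p ∧ ∃ U ∈ 𝕄.M, ∀ i ∈ I,
      F.DenseBelow q fun r => ∃ t ∈ U, E i t ∧ F.Extends r t := by
  have h_def : DefinableRel 𝕄 fun v : Fin 2 → ZFSet.{u} =>
      v 1 ∈ F.P ∧ (E (v 0) (v 1) ∨ ¬ F.Compatible (v 1) p) :=
    (DefinableRel.mem_class (.var _) F.P_cls).and <|
      hE.or (definableRel_compatible (.var _) (.const (mem_M_of_mem_P hp))).not
  obtain ⟨D, hD, mem_D⟩ := h_def.exists_mem_Cls_pair_mem_iff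
    (R := fun i x => x ∈ F.P ∧ (E i x ∨ ¬ F.Compatible x p))
  have of_pair_mem_D {i x : ZFSet.{u}} (hx : i.pair x ∈ D) :
      x ∈ F.P ∧ (E i x ∨ ¬ F.Compatible x p) :=
    have hM := GBModel.mem_of_orderedPair_mem (𝕄.classes_sub D hD hx)
    (mem_D i hM.1 x hM.2).1 hx
  obtain ⟨q, hq, hqp, d, hd, hd_fun, hd_dense⟩ := h p hp I hI D hD fun i hi =>
    ⟨fun x hx => (of_pair_mem_D hx).1, fun r hr =>
      let ⟨x, hxr, hx⟩ := (hd i hi).exists_or_not_compatible hr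
      ⟨x, (mem_D i (𝕄.transitive I hI i hi) x hxr.mem_M).2 ⟨hxr.1, hx⟩, hxr.2.2⟩⟩
  refine ⟨q, ⟨hq, hp, hqp⟩, ⋃₀ ⋃₀ ⋃₀ d,
    𝕄.sUnion_mem _ (𝕄.sUnion_mem _ (𝕄.sUnion_mem d hd)), fun i hi r hr => ?_⟩
  obtain ⟨t, ht, r', hr', hr'r, hr't⟩ := (hd_dense i hi).2 r hr.1 hr.2.2
  obtain ⟨htP, hEt⟩ := of_pair_mem_D ((hd_dense i hi).1 t ht)
  have r'_extends_r : F.Extends r' r := ⟨hr', hr.1, hr'r⟩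
  have r'_extends_t : F.Extends r' t := ⟨hr', htP, hr't⟩
  have h_compat : F.Compatible t p :=
    ⟨r', r'_extends_t, (r'_extends_r.trans hr).trans ⟨hq, hp, hqp⟩⟩
  exact ⟨r', r'_extends_r, t,
    ZFSet.mem_sUnion_of_mem ht (snd_mem_sUnion_sUnion (pair_zapp_mem hd_fun hi)),
    hEt.resolve_right (not_not_intro h_compat), r'_extends_t⟩

/-- Below each condition either pretameness provides such a set or some `E i` fails hereditarily;
genericity excludes the latter. -/
theorem exists_generic_set_denseBelow (h : Pretame 𝕄 F) (hG : IsGeneric 𝕄 F.P F.le G)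
    (hI : I ∈ 𝕄.M) (hE : DefinableRel 𝕄 fun v : Fin 2 → ZFSet.{u} => E (v 0) (v 1))
    (hE_open : ∀ i ∈ I, ∀ t t', E i t → F.Extends t' t → E i t')
    (hEG : ∀ i ∈ I, ∃ g ∈ G, E i g) :
    ∃ q ∈ G, ∃ U ∈ 𝕄.M, ∀ i ∈ I, F.DenseBelow q fun r => ∃ t ∈ U, E i t ∧ F.Extends r t := by
  obtain ⟨s, hs⟩ := hG.1.2.1
  have h_def : DefinableRel 𝕄 fun v : Fin 1 → ZFSet.{u} =>
      (∃ U ∈ 𝕄.M, ∀ i ∈ I, F.DenseBelow (v 0) fun r => ∃ t ∈ U, E i t ∧ F.Extends r t) ∨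
        ∃ i ∈ I, ∀ r, F.Extends r (v 0) → ¬ E i r := by
    refine .or (.exists_mem_M (.forall_mem (.const hI) (definableRel_denseBelow (.var _)
      (.exists_mem (.var _) (.and (hE.rename ![2, 5]) (definableRel_extends (.var _) (.var _)))))))
      (.exists_mem (.const hI) (.forall_of_imp_mem_M (definableRel_extends (.var _) (.var _))
        (.not (hE.rename ![1, 2])) fun _ _ _ hx => hx.mem_M))
  obtain ⟨q, hq, hU | ⟨i, hi, h_bad⟩⟩ := hG.exists_mem_of_denseBelow hs
    (R := fun q => (∃ U ∈ 𝕄.M, ∀ i ∈ I, F.DenseBelow q fun r => ∃ t ∈ U, E i t ∧ F.Extends r t) ∨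
      ∃ i ∈ I, ∀ r, F.Extends r q → ¬ E i r) h_def fun p hp => by
    by_cases h_bad : ∃ i ∈ I, ∃ r, F.Extends r p ∧ ∀ r', F.Extends r' r → ¬ E i r'
    · obtain ⟨i, hi, r, hr, h_bad⟩ := h_bad
      exact ⟨r, hr, .inr ⟨i, hi, h_bad⟩⟩
    · push Not at h_bad
      obtain ⟨q, hqp, hU⟩ := h.exists_set_denseBelow hp.1 hI hE h_bad
      exact ⟨q, hqp, .inl hU⟩
  · exact ⟨q, hq, hU⟩
  · obtain ⟨g, hg, hEg⟩ := hEG i hi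
    obtain ⟨r, -, hrq, hrg⟩ := hG.exists_extends hq hg
    exact absurd (hE_open i hi g r hEg hrg) (h_bad r hrq)


theorem exists_generic_set_denseBelow_of_pair_mem (h : Pretame 𝕄 F)
    (hG : IsGeneric 𝕄 F.P F.le G) {ρ : ZFSet.{u}} (hρ : ρ ∈ 𝕄.M)
    (hE : DefinableRel 𝕄 fun v : Fin 2 → ZFSet.{u} => E (v 0) (v 1))
    (hE_open : ∀ π t t', E π t → F.Extends t' t → E π t')
    (hEG : ∀ π a, π.pair a ∈ ρ → a ∈ G → ∃ g ∈ G, E π g) :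
    ∃ q ∈ G, ∃ U ∈ 𝕄.M, ∀ π a, π.pair a ∈ ρ →
      F.DenseBelow q fun r => F.Compatible r a → ∃ t ∈ U, E π t ∧ F.Extends r t := by
  have h_def : DefinableRel 𝕄 fun v : Fin 2 → ZFSet.{u} =>
      ∀ π a, π.pair a ∈ ({v 0} : ZFSet) → F.Compatible (v 1) a → E π (v 1) :=
    .forall_pair_mem (.singleton (.var _))
      ((definableRel_compatible (.var _) (.var _)).imp (hE.rename ![2, 1]))
  have meets_G : ∀ i ∈ ρ, ∃ g ∈ G, ∀ π a, π.pair a ∈ ({i} : ZFSet) → F.Compatible g a → E π g := by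
    intro i hi
    by_cases h_pair : ∃ π a : ZFSet, i = π.pair a
    · obtain ⟨π, a, rfl⟩ := h_pair
      obtain ⟨g, hg, hga⟩ := hG.exists_mem_imp_of_compatible
        (GBModel.snd_mem_of_pair_mem hρ hi) (hEG π a hi)
      refine ⟨g, hg, fun π' a' h_eq => ?_⟩
      obtain ⟨rfl, rfl⟩ := ZFSet.pair_inj.1 (ZFSet.mem_singleton.1 h_eq)
      exact hga
    · obtain ⟨g, hg⟩ := hG.1.2.1
      exact ⟨g, hg, fun π a h_eq => absurd ⟨π, a, (ZFSet.mem_singleton.1 h_eq).symm⟩ h_pair⟩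
  obtain ⟨q, hq, U, hU, hd⟩ := h.exists_generic_set_denseBelow hG hρ
    (E := fun i r => ∀ π a, π.pair a ∈ ({i} : ZFSet) → F.Compatible r a → E π r) h_def
    (fun i _ t t' ht ht't π a hi ha => hE_open π t t' (ht π a hi (ha.mono_left ht't)) ht't) meets_G
  refine ⟨q, hq, U, hU, fun π a hπa => (hd _ hπa).imp ?_⟩
  rintro r ⟨t, htU, ht, hrt⟩ hra
  exact ⟨t, htU, ht π a (ZFSet.mem_singleton.2 rfl) (hra.mono_left hrt), hrt⟩

end Pretame

end Generic

/-! ### Names -/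

theorem rank_lt_of_pair_mem {π a ρ : ZFSet.{u}} (h : π.pair a ∈ ρ) : π.rank < ρ.rank :=
  calc π.rank < ({π} : ZFSet.{u}).rank := ZFSet.rank_lt_of_mem (ZFSet.mem_singleton.2 rfl)
    _ < (π.pair a).rank := ZFSet.rank_lt_of_mem (ZFSet.mem_pair.2 (.inl rfl))
    _ < ρ.rank := ZFSet.rank_lt_of_mem h

theorem name_induction {motive : ZFSet.{u} → Prop}
    (ih : ∀ ρ, (∀ π a, π.pair a ∈ ρ → motive π) → motive ρ) (ρ : ZFSet.{u}) : motive ρ :=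
  (InvImage.wf ZFSet.rank Ordinal.lt_wf).induction ρ fun ρ h_lt =>
    ih ρ fun _ _ h => h_lt _ (rank_lt_of_pair_mem h)

theorem mem_nameEval {G : Set ZFSet.{u}} {ρ x : ZFSet.{u}} :
    x ∈ nameEval G ρ ↔ ∃ π a, a ∈ G ∧ π.pair a ∈ ρ ∧ nameEval G π = x := by
  rw [nameEval, nameEvalAux, zimage, @ZFSet.mem_image _ (Classical.allZFSetDefinable _)]
  simp only [ZFSet.mem_sep]
  constructor
  · rintro ⟨π, ⟨-, a, ha, hπa⟩, rfl⟩
    exact ⟨π, a, ha, hπa, by rw [dif_pos (rank_lt_of_pair_mem hπa), nameEval]⟩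
  · rintro ⟨π, a, ha, hπa, rfl⟩
    exact ⟨π, ⟨fst_mem_sUnion_sUnion hπa, a, ha, hπa⟩, dif_pos (rank_lt_of_pair_mem hπa)⟩

/-! ### Forcing the value of a name -/

namespace ClassForcing

/-- One step of the recursion defining `s ⊩ ρ = y`, where `R π z r` stands for the instances
`r ⊩ π = z` with `π` in the domain of `ρ`: densely below `s` every `z ∈ y` is the value of some
name in `ρ`, and every name that enters `ρ` has its value in `y`. -/
def ForcesEqStep (F : ClassForcing 𝕄) (R : ZFSet.{u} → ZFSet.{u} → ZFSet.{u} → Prop)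
    (ρ y s : ZFSet.{u}) : Prop :=
  (∀ z ∈ y, F.DenseBelow s fun r => ∃ π a, π.pair a ∈ ρ ∧ F.Extends r a ∧ R π z r) ∧
    ∀ π a, π.pair a ∈ ρ → F.DenseBelow s fun r => F.Compatible r a → ∃ z ∈ y, R π z r

/-- The instance `r ⊩ π = z` follows from one listed in `W`; the triple `⟨π, ⟨z, t⟩⟩ ∈ W` lists
`t ⊩ π = z`. -/
def Recorded (F : ClassForcing 𝕄) (W π z r : ZFSet.{u}) : Prop :=
  ∃ t, F.Extends r t ∧ π.pair (z.pair t) ∈ W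

/-- Every instance listed in `W` follows in one step from instances listed in `W`. -/
def Justified (F : ClassForcing 𝕄) (W : ZFSet.{u}) : Prop :=
  ∀ ρ y s, ρ.pair (y.pair s) ∈ W → F.ForcesEqStep (F.Recorded W) ρ y s

/-- The forcing relation `s ⊩ ρ = y` for `y ∈ M`. Quantifying over set-sized justifications instead
of recursing over names makes it first-order definable over `𝕄`. -/
def ForcesEq (F : ClassForcing 𝕄) (ρ y s : ZFSet.{u}) : Prop :=
  ∃ W ∈ 𝕄.M, F.Justified W ∧ ρ.pair (y.pair s) ∈ W

variable {F : ClassForcing 𝕄} {R R' : ZFSet.{u} → ZFSet.{u} → ZFSet.{u} → Prop}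
  {W W' ρ π y z s s' r : ZFSet.{u}}

theorem ForcesEqStep.of_extends (h : F.ForcesEqStep R ρ y s) (hs : F.Extends s' s) :
    F.ForcesEqStep R ρ y s' :=
  ⟨fun z hz => (h.1 z hz).of_extends hs, fun π a hπa => (h.2 π a hπa).of_extends hs⟩

theorem ForcesEqStep.imp (h : F.ForcesEqStep R ρ y s) (hR : ∀ π z r, R π z r → R' π z r) :
    F.ForcesEqStep R' ρ y s :=
  ⟨fun z hz => (h.1 z hz).imp fun _ ⟨π, a, hπa, hra, hπ⟩ => ⟨π, a, hπa, hra, hR _ _ _ hπ⟩,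
    fun π a hπa => (h.2 π a hπa).imp fun _ hr hra =>
      let ⟨z, hz, hπ⟩ := hr hra
      ⟨z, hz, hR _ _ _ hπ⟩⟩

theorem Recorded.mono (hW : W ⊆ W') (h : F.Recorded W π z r) : F.Recorded W' π z r :=
  let ⟨t, hrt, ht⟩ := h
  ⟨t, hrt, hW ht⟩

theorem Justified.sUnion {A : ZFSet.{u}} (hA : ∀ W ∈ A, F.Justified W) : F.Justified (⋃₀ A) := by
  intro ρ y s h
  obtain ⟨W, hWA, hW⟩ := ZFSet.mem_sUnion.1 h
  exact (hA W hWA ρ y s hW).imp fun _ _ _ =>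
    Recorded.mono fun _ hx => ZFSet.mem_sUnion_of_mem hx hWA

theorem Justified.insert (hW : F.Justified W) (h : F.ForcesEqStep (F.Recorded W) ρ y s) :
    F.Justified (insert (ρ.pair (y.pair s)) W) := by
  have step_insert {ρ' y' s' : ZFSet.{u}} (h' : F.ForcesEqStep (F.Recorded W) ρ' y' s') :
      F.ForcesEqStep (F.Recorded (Insert.insert (ρ.pair (y.pair s)) W)) ρ' y' s' :=
    h'.imp fun _ _ _ => Recorded.mono fun _ => ZFSet.mem_insert_of_mem _
  intro ρ' y' s' h'
  rcases ZFSet.mem_insert_iff.1 h' with h_eq | hmem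
  · obtain ⟨rfl, h_snd⟩ := ZFSet.pair_inj.1 h_eq
    obtain ⟨rfl, rfl⟩ := ZFSet.pair_inj.1 h_snd
    exact step_insert h
  · exact step_insert (hW ρ' y' s' hmem)

theorem ForcesEq.mem_M (h : F.ForcesEq ρ y s) : ρ ∈ 𝕄.M ∧ y ∈ 𝕄.M := by
  obtain ⟨W, hW, -, hmem⟩ := h
  obtain ⟨hρ, hys⟩ := GBModel.mem_of_orderedPair_mem (𝕄.transitive W hW _ hmem)
  exact ⟨hρ, (GBModel.mem_of_orderedPair_mem hys).1⟩

theorem Justified.forcesEq_of_step (hW : F.Justified W) (hWM : W ∈ 𝕄.M) (hρ : ρ ∈ 𝕄.M)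
    (hy : y ∈ 𝕄.M) (hs : s ∈ 𝕄.M) (h : F.ForcesEqStep (F.Recorded W) ρ y s) : F.ForcesEq ρ y s :=
  ⟨_, GBModel.insert_mem (GBModel.orderedPair_mem hρ (GBModel.orderedPair_mem hy hs)) hWM,
    hW.insert h, ZFSet.mem_insert _ _⟩

theorem ForcesEq.of_extends (h : F.ForcesEq ρ y s) (hs : F.Extends s' s) : F.ForcesEq ρ y s' :=
  let ⟨_, hWM, hW, hmem⟩ := h
  hW.forcesEq_of_step hWM h.mem_M.1 h.mem_M.2 hs.mem_M ((hW ρ y s hmem).of_extends hs)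

theorem ForcesEq.step (h : F.ForcesEq ρ y s) : F.ForcesEqStep F.ForcesEq ρ y s :=
  let ⟨W, hWM, hW, hmem⟩ := h
  (hW ρ y s hmem).imp fun _ _ _ ⟨_, hrt, ht⟩ => ForcesEq.of_extends ⟨W, hWM, hW, ht⟩ hrt

section Definability

variable {n : ℕ} {t t₁ t₂ t₃ : (Fin n → ZFSet.{u}) → ZFSet.{u}}

theorem definableRel_recorded (ht : DefinableFun 𝕄 t) (ht₁ : DefinableFun 𝕄 t₁)
    (ht₂ : DefinableFun 𝕄 t₂) (ht₃ : DefinableFun 𝕄 t₃) :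
    DefinableRel 𝕄 fun v => F.Recorded (t v) (t₁ v) (t₂ v) (t₃ v) :=
  .exists_of_imp_mem_M
    ((definableRel_extends (ht₃.rename _) (.var _)).and
      (.mem (.pair (ht₁.rename _) (.pair (ht₂.rename _) (.var _))) (ht.rename _)))
    fun _ _ _ hx => mem_M_of_mem_P hx.1.2.1

theorem definableRel_forcesEqStep_recorded (ht : DefinableFun 𝕄 t) (ht₁ : DefinableFun 𝕄 t₁)
    (ht₂ : DefinableFun 𝕄 t₂) (ht₃ : DefinableFun 𝕄 t₃) :
    DefinableRel 𝕄 fun v => F.ForcesEqStep (F.Recorded (t v)) (t₁ v) (t₂ v) (t₃ v) := by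
  refine .and (.forall_mem ht₂ ?_) (.forall_pair_mem ht₁ ?_)
  · refine definableRel_denseBelow (ht₃.rename _) (.exists_pair_mem (ht₁.rename _) ?_)
    exact (definableRel_extends (.var _) (.var _)).and
      (definableRel_recorded (ht.rename _) (.var _) (.var _) (.var _))
  · refine definableRel_denseBelow (ht₃.rename _) 
      ((definableRel_compatible (.var _) (.var _)).imp (.exists_mem (ht₂.rename _) ?_))
    exact definableRel_recorded (ht.rename _) (.var _) (.var _) (.var _)

theorem definableRel_justified (ht : DefinableFun 𝕄 t) :
    DefinableRel 𝕄 fun v => F.Justified (t v) := by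
  have h_def : DefinableRel 𝕄 fun v => ∀ ρ x, ρ.pair x ∈ t v →
      ∀ y s, y.pair s ∈ ({x} : ZFSet) → F.ForcesEqStep (F.Recorded (t v)) ρ y s :=
    .forall_pair_mem ht <| .forall_pair_mem (.singleton (.var _)) <|
      definableRel_forcesEqStep_recorded (ht.rename _) (.var _) (.var _) (.var _)
  refine h_def.of_iff fun v _ => ⟨fun h ρ y s hmem => ?_, fun h ρ x hx y s h_eq => ?_⟩
  · exact h ρ _ hmem y s (ZFSet.mem_singleton.2 rfl)
  · exact h ρ y s (ZFSet.mem_singleton.1 h_eq ▸ hx)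

theorem definableRel_forcesEq (ht₁ : DefinableFun 𝕄 t₁) (ht₂ : DefinableFun 𝕄 t₂)
    (ht₃ : DefinableFun 𝕄 t₃) : DefinableRel 𝕄 fun v => F.ForcesEq (t₁ v) (t₂ v) (t₃ v) :=
  .exists_mem_M ((definableRel_justified (.var _)).and
    (.mem (.pair (ht₁.rename _) (.pair (ht₂.rename _) (ht₃.rename _))) (.var _)))

end Definability

theorem exists_justified_of_forcesEq {A : ZFSet.{u}} (hA : A ∈ 𝕄.M) :
    ∃ W ∈ 𝕄.M, F.Justified W ∧
      ∀ π z t, π.pair (z.pair t) ∈ A → F.ForcesEq π z t → π.pair (z.pair t) ∈ W := by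
  have h_def : DefinableRel 𝕄 fun v : Fin 2 → ZFSet.{u} => F.Justified (v 1) ∧ v 0 ∈ v 1 :=
    (definableRel_justified (.var _)).and (.mem (.var _) (.var _))
  obtain ⟨B, hB, collect_B⟩ := h_def.exists_collect (R := fun x W => F.Justified W ∧ x ∈ W) hA
  obtain ⟨B', hB', mem_B'⟩ := (definableRel_justified (.var 0)).exists_sep (R := F.Justified) hB
  refine ⟨⋃₀ B', 𝕄.sUnion_mem B' hB', .sUnion fun W hW => ((mem_B' W).1 hW).2,
    fun π z t hmem h => ?_⟩
  obtain ⟨W, hWB, hW, hmemW⟩ := collect_B _ hmem h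
  exact ZFSet.mem_sUnion_of_mem hmemW ((mem_B' W).2 ⟨hWB, hW⟩)

/-- The converse of `ForcesEq.step` needs the premises to be witnessed by a set `U` of conditions,
since justifications are sets. -/
theorem ForcesEq.of_step_of_mem {U : ZFSet.{u}} (hU : U ∈ 𝕄.M) (hρ : ρ ∈ 𝕄.M) (hy : y ∈ 𝕄.M)
    (hs : s ∈ F.P)
    (h : F.ForcesEqStep (fun π z r => ∃ t ∈ U, F.ForcesEq π z t ∧ F.Extends r t) ρ y s) :
    F.ForcesEq ρ y s := by
  obtain ⟨B, hB, pair_mem_B⟩ := GBModel.exists_forall_pair_mem hy hU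
  obtain ⟨A, hA, pair_mem_A⟩ :=
    GBModel.exists_forall_pair_mem (𝕄.sUnion_mem _ (𝕄.sUnion_mem ρ hρ)) hB
  obtain ⟨W, hWM, hW, mem_W⟩ := exists_justified_of_forcesEq (F := F) hA
  have recorded {π a z r : ZFSet.{u}} (hπ : π.pair a ∈ ρ) (hz : z ∈ y)
      (hr : ∃ t ∈ U, F.ForcesEq π z t ∧ F.Extends r t) : F.Recorded W π z r :=
    let ⟨t, htU, ht, hrt⟩ := hr
    ⟨t, hrt, mem_W π z t (pair_mem_A π (fst_mem_sUnion_sUnion hπ) _ (pair_mem_B z hz t htU)) ht⟩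
  refine hW.forcesEq_of_step hWM hρ hy (mem_M_of_mem_P hs) ⟨fun z hz => ?_, fun π a hπa => ?_⟩
  · exact (h.1 z hz).imp fun r ⟨π, a, hπa, hra, hr⟩ => ⟨π, a, hπa, hra, recorded hπa hz hr⟩
  · exact (h.2 π a hπa).imp fun r hr hra =>
      let ⟨z, hz, hr⟩ := hr hra
      ⟨z, hz, recorded hπa hz hr⟩

end ClassForcing

/-! ### Values of names in generic extensions -/

section Values

open ClassForcing

variable {F : ClassForcing 𝕄} {G : Set ZFSet.{u}} {ρ y s σ : ZFSet.{u}}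

theorem IsGeneric.nameEval_eq_of_forcesEq (hG : IsGeneric 𝕄 F.P F.le G) (hs : s ∈ G)
    (h : F.ForcesEq ρ y s) : nameEval G ρ = y := by
  induction ρ using name_induction generalizing y s with | ih ρ ih
  obtain ⟨hρ, hy⟩ := h.mem_M
  ext x
  rw [mem_nameEval]
  constructor
  · rintro ⟨π, a, haG, hπa, rfl⟩
    have h_def : DefinableRel 𝕄 fun v : Fin 1 → ZFSet.{u} =>
        F.Compatible (v 0) a → ∃ z ∈ y, F.ForcesEq π z (v 0) :=
      (definableRel_compatible (.var _) (.const (GBModel.snd_mem_of_pair_mem hρ hπa))).imp <|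
        .exists_mem (.const hy) <|
          definableRel_forcesEq (.const (GBModel.fst_mem_of_pair_mem hρ hπa)) (.var _) (.var _)
    obtain ⟨r, hr, hra⟩ := hG.exists_mem_of_denseBelow hs h_def (h.step.2 π a hπa)
    obtain ⟨z, hz, hπz⟩ := hra (hG.compatible hr haG)
    rwa [ih π a hπa hr hπz]
  · intro hx
    have h_def : DefinableRel 𝕄 fun v : Fin 1 → ZFSet.{u} =>
        ∃ π a, π.pair a ∈ ρ ∧ F.Extends (v 0) a ∧ F.ForcesEq π x (v 0) :=
      .exists_pair_mem (.const hρ) <| (definableRel_extends (.var _) (.var _)).and <|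
        definableRel_forcesEq (.var _) (.const (𝕄.transitive y hy x hx)) (.var _)
    obtain ⟨r, hr, π, a, hπa, hra, hπx⟩ := hG.exists_mem_of_denseBelow hs h_def (h.step.1 x hx)
    exact ⟨π, a, hG.mem_of_extends hr hra, hπa, ih π a hπa hr hπx⟩

namespace Pretame

theorem exists_forcesEq_of_forall_exists_forcesEq (h : Pretame 𝕄 F)
    (hG : IsGeneric 𝕄 F.P F.le G) (hρ : ρ ∈ 𝕄.M) (hy : y ∈ 𝕄.M)
    (h_values : ∀ z ∈ y, ∃ π a, π.pair a ∈ ρ ∧ a ∈ G ∧ ∃ g ∈ G, F.ForcesEq π z g)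
    (h_names : ∀ π a, π.pair a ∈ ρ → a ∈ G → ∃ g ∈ G, ∃ z ∈ y, F.ForcesEq π z g) :
    ∃ s ∈ G, F.ForcesEq ρ y s := by
  obtain ⟨q₁, hq₁, U₁, hU₁, values_dense⟩ := h.exists_generic_set_denseBelow hG hy
    (E := fun z r => ∃ π a, π.pair a ∈ ρ ∧ F.Extends r a ∧ F.ForcesEq π z r)
    (.exists_pair_mem (.const hρ) <| (definableRel_extends (.var _) (.var _)).and <|
      definableRel_forcesEq (.var _) (.var _) (.var _))
    (fun _ _ _ _ ⟨π, a, hπa, hta, hπ⟩ ht' => ⟨π, a, hπa, ht'.trans hta, hπ.of_extends ht'⟩)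
    fun z hz =>
      let ⟨π, a, hπa, ha, _, hg, hπ⟩ := h_values z hz
      let ⟨g', hg', hg'g, hg'a⟩ := hG.exists_extends hg ha
      ⟨g', hg', π, a, hπa, hg'a, hπ.of_extends hg'g⟩
  obtain ⟨q₂, hq₂, U₂, hU₂, names_dense⟩ := h.exists_generic_set_denseBelow_of_pair_mem hG hρ
    (E := fun π r => ∃ z ∈ y, F.ForcesEq π z r)
    (.exists_mem (.const hy) (definableRel_forcesEq (.var _) (.var _) (.var _)))
    (fun _ _ _ ⟨z, hz, hπ⟩ ht' => ⟨z, hz, hπ.of_extends ht'⟩) h_names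
  obtain ⟨s, hs, hsq₁, hsq₂⟩ := hG.exists_extends hq₁ hq₂
  refine ⟨s, hs, .of_step_of_mem (GBModel.union_mem hU₁ hU₂) hρ hy (hG.mem_P hs)
    ⟨fun z hz => ?_, fun π a hπa => ?_⟩⟩
  · refine ((values_dense z hz).of_extends hsq₁).imp ?_
    rintro r ⟨t, htU, ⟨π, a, hπa, hta, hπ⟩, hrt⟩
    exact ⟨π, a, hπa, hrt.trans hta, t, ZFSet.mem_union.2 (.inl htU), hπ, hrt⟩
  · refine ((names_dense π a hπa).of_extends hsq₂).imp fun r hr hra => ?_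
    obtain ⟨t, htU, ⟨z, hz, hπ⟩, hrt⟩ := hr hra
    exact ⟨z, hz, t, ZFSet.mem_union.2 (.inr htU), hπ, hrt⟩

theorem exists_forcesEq_nameEval (h : Pretame 𝕄 F) (hG : IsGeneric 𝕄 F.P F.le G) (hρ : ρ ∈ 𝕄.M)
    (h_val : nameEval G ρ ∈ 𝕄.M) : ∃ s ∈ G, F.ForcesEq ρ (nameEval G ρ) s := by
  induction ρ using name_induction with | ih ρ ih
  have forced_of_mem {π a : ZFSet.{u}} (hπa : π.pair a ∈ ρ) (ha : a ∈ G) :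
      nameEval G π ∈ nameEval G ρ ∧ ∃ g ∈ G, F.ForcesEq π (nameEval G π) g :=
    have h_mem := mem_nameEval.2 ⟨π, a, ha, hπa, rfl⟩
    ⟨h_mem, ih π a hπa (GBModel.fst_mem_of_pair_mem hρ hπa) (𝕄.transitive _ h_val _ h_mem)⟩
  refine h.exists_forcesEq_of_forall_exists_forcesEq hG hρ h_val (fun z hz => ?_) ?_
  · obtain ⟨π, a, ha, hπa, rfl⟩ := mem_nameEval.1 hz
    exact ⟨π, a, hπa, ha, (forced_of_mem hπa ha).2⟩
  · intro π a hπa ha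
    obtain ⟨h_mem, g, hg, hπ⟩ := forced_of_mem hπa ha
    exact ⟨g, hg, _, h_mem, hπ⟩

theorem exists_set_forcesEq (h : Pretame 𝕄 F) (hG : IsGeneric 𝕄 F.P F.le G) (hσ : σ ∈ 𝕄.M)
    (h_sub : ∀ x ∈ nameEval G σ, x ∈ 𝕄.M) :
    ∃ U ∈ 𝕄.M, ∀ π a, π.pair a ∈ σ → a ∈ G → ∃ t ∈ U, t ∈ G ∧ ∃ z ∈ 𝕄.M, F.ForcesEq π z t := by
  obtain ⟨q, hq, U, hU, decided_dense⟩ := h.exists_generic_set_denseBelow_of_pair_mem hG hσ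
    (E := fun π r => ∃ z ∈ 𝕄.M, F.ForcesEq π z r)
    (.exists_mem_M (definableRel_forcesEq (.var _) (.var _) (.var _)))
    (fun _ _ _ ⟨z, hz, hπ⟩ ht' => ⟨z, hz, hπ.of_extends ht'⟩) fun π a hπa ha =>
      have h_val := h_sub _ (mem_nameEval.2 ⟨π, a, ha, hπa, rfl⟩)
      let ⟨g, hg, hπ⟩ :=
        h.exists_forcesEq_nameEval hG (GBModel.fst_mem_of_pair_mem hσ hπa) h_val
      ⟨g, hg, _, h_val, hπ⟩
  refine ⟨U, hU, fun π a hπa ha => ?_⟩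
  have h_def : DefinableRel 𝕄 fun v : Fin 1 → ZFSet.{u} => F.Compatible (v 0) a →
      ∃ t ∈ U, (∃ z ∈ 𝕄.M, F.ForcesEq π z t) ∧ F.Extends (v 0) t :=
    (definableRel_compatible (.var _) (.const (GBModel.snd_mem_of_pair_mem hσ hπa))).imp <|
      .exists_mem (.const hU) <| .and
        (.exists_mem_M <|
          definableRel_forcesEq (.const (GBModel.fst_mem_of_pair_mem hσ hπa)) (.var _) (.var _))
        (definableRel_extends (.var _) (.var _))
  obtain ⟨r, hr, hra⟩ := hG.exists_mem_of_denseBelow hq h_def (decided_dense π a hπa)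
  obtain ⟨t, htU, hπ, hrt⟩ := hra (hG.compatible hr ha)
  exact ⟨t, htU, hG.mem_of_extends hr hrt, hπ⟩

theorem exists_mem_M_nameEval_subset (h : Pretame 𝕄 F) (hG : IsGeneric 𝕄 F.P F.le G)
    (hσ : σ ∈ 𝕄.M) (h_sub : ∀ x ∈ nameEval G σ, x ∈ 𝕄.M) : ∃ b ∈ 𝕄.M, nameEval G σ ⊆ b := by
  obtain ⟨U, hU, forced_U⟩ := h.exists_set_forcesEq hG hσ h_sub
  obtain ⟨A, hA, pair_mem_A⟩ :=
    GBModel.exists_forall_pair_mem (𝕄.sUnion_mem _ (𝕄.sUnion_mem σ hσ)) hU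
  have h_def : DefinableRel 𝕄 fun v : Fin 2 → ZFSet.{u} =>
      ∃ π t, π.pair t ∈ ({v 0} : ZFSet) ∧ F.ForcesEq π (v 1) t :=
    .exists_pair_mem (.singleton (.var _)) (definableRel_forcesEq (.var _) (.var _) (.var _))
  obtain ⟨b, hb, collect_b⟩ := h_def.exists_collect
    (R := fun x z => ∃ π t, π.pair t ∈ ({x} : ZFSet) ∧ F.ForcesEq π z t) hA
  refine ⟨b, hb, fun x hx => ?_⟩
  obtain ⟨π, a, ha, hπa, rfl⟩ := mem_nameEval.1 hx
  obtain ⟨t, htU, htG, z, hz, hπz⟩ := forced_U π a hπa ha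
  obtain ⟨z', hz', π', t', h_eq, hπz'⟩ :=
    collect_b _ (pair_mem_A π (fst_mem_sUnion_sUnion hπa) t htU)
      ⟨z, hz, π, t, ZFSet.mem_singleton.2 rfl, hπz⟩
  obtain ⟨rfl, rfl⟩ := ZFSet.pair_inj.1 (ZFSet.mem_singleton.1 h_eq)
  rwa [hG.nameEval_eq_of_forcesEq htG hπz']

end Pretame

end Values

end Development

/-- If `ℙ` is a pretame notion of class forcing for `𝕄 ⊨ GB⁻`, then no proper
class `X` of `𝕄` is turned into a set by forcing with `ℙ`. -/
theorem pretame_no_class_to_set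
    (𝕄 : GBModel) (F : ClassForcing 𝕄) (h : Pretame 𝕄 F)
    (X : Set ZFSet) (hX : IsProperClass 𝕄 X) :
    ¬ TurnsIntoSet 𝕄 F X := by
  rintro ⟨σ, hσ, _, G, hG, hσX⟩
  have mem_X (x : ZFSet) : x ∈ nameEval G σ ↔ x ∈ X := by rw [← hσX]; rfl
  obtain ⟨b, hb, hσb⟩ := h.exists_mem_M_nameEval_subset hG hσ fun x hx =>
    𝕄.classes_sub X hX.1 ((mem_X x).1 hx)
  obtain ⟨c, hc, mem_c⟩ := 𝕄.separation X hX.1 b hb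
  have hcσ : c = nameEval G σ := by
    ext x
    rw [mem_c, ← mem_X]
    exact and_iff_right_of_imp (@hσb x)
  exact hX.2 ⟨c, hc, hcσ ▸ hσX⟩

end CF
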